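/- arXiv:1504.06748 — 3 statements merged into one kernel-verified Lean document; each statement's English description precedes it below -/
import Mathlib

section
/- Let S be a point set of size q + 2 in a projective plane of order q and let P be a point of S. (1) If P is contained in a k-secant of S, then w(P) ≥ k − 2. (2) If P is contained in at least k trisecants of S, then w(P) ≥ (4/3)k. -/
/-- `tsec S x i` is `t_i(x)`: the number of `i`-secants of the point set `S` through the
point `x` (lines `l` with `x ∈ l` and `|S ∩ l| = i`). -/
noncomputable def tsec {P : Type*} (L : Type*) [Membership P L] (S : Set P) (x : P) (i : ℕ) : ℕ :=
  {l : L | x ∈ l ∧ {y ∈ S | y ∈ l}.ncard = i}.ncard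

/-- The weight `w(x) = Σ_{i odd} t_i(x)/i` of a point `x` of a point set `S` in a projective
plane of order `q`; every line meets `S` in at most `q + 1` points, so it suffices to let `i`
range over `0, 1, …, q + 1`. -/
noncomputable def pointWeight {P : Type*} (L : Type*) [Membership P L] (q : ℕ) (S : Set P)
    (x : P) : ℚ :=
  ∑ i ∈ Finset.range (q + 2), if Odd i then (tsec L S x i : ℚ) / (i : ℚ) else 0

/-!
A plane of order `q` has `q + 1` lines through `x`, so `|S| = lineCount L x + 1`. These lines cover
the other points of `S` exactly once, hence they meet `S` in two points on average, counting `x` on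
each of them. Only tangents fall below this average, so they must compensate the longer secants:
`t₁(x) = Σ (|S ∩ m| - 2)`, summed over the non-tangents `m` through `x`. A `k`-secant contributes
`k - 2` to the sum and each trisecant contributes `1`, so `t₁ ≥ k - 2` and `t₁ ≥ t₃`; finally
`w ≥ t₁ + t₃ / 3`. If `|S| ≤ lineCount L x + 1`, the same count in a linear space gives `≥` in place
of the equality for `t₁`.
-/

open Configuration

section Weight

variable {P L : Type*} [Membership P L] {S : Set P} {x : P}

lemma tsec_eq_zero_of_lt {n i : ℕ} (hsecant : ∀ l : L, x ∈ l → {y ∈ S | y ∈ l}.ncard ≤ n)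
    (hi : n < i) : tsec L S x i = 0 := by
  have hempty : {l : L | x ∈ l ∧ {y ∈ S | y ∈ l}.ncard = i} = ∅ :=
    Set.eq_empty_of_forall_notMem fun l hl => (hi.trans_le hl.2.ge).not_ge (hsecant l hl.1)
  rw [tsec, hempty, Set.ncard_empty]

lemma sum_tsec_div_le_pointWeight {q : ℕ}
    (hsecant : ∀ l : L, x ∈ l → {y ∈ S | y ∈ l}.ncard ≤ q + 1)
    {s : Finset ℕ} (hs : ∀ i ∈ s, Odd i) :
    ∑ i ∈ s, (tsec L S x i : ℚ) / i ≤ pointWeight L q S x := by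
  have hlarge : ∀ i ∈ s, ¬ i < q + 2 → (tsec L S x i : ℚ) / i = 0 := fun i _ hi => by
    rw [tsec_eq_zero_of_lt hsecant (not_lt.mp hi), Nat.cast_zero, zero_div]
  calc ∑ i ∈ s, (tsec L S x i : ℚ) / i
      = ∑ i ∈ s with i < q + 2, (tsec L S x i : ℚ) / i :=
        (Finset.sum_filter_of_ne fun i hi => not_imp_comm.mp (hlarge i hi)).symm
    _ ≤ ∑ i ∈ Finset.range (q + 2) with Odd i, (tsec L S x i : ℚ) / i := by
        refine Finset.sum_le_sum_of_subset_of_nonneg (fun i hi => ?_) fun _ _ _ => by positivity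
        rw [Finset.mem_filter] at hi ⊢
        exact ⟨Finset.mem_range.mpr hi.2, hs i hi.1⟩
    _ = pointWeight L q S x := Finset.sum_filter ..

lemma tsec_one_add_tsec_three_div_le_pointWeight {q : ℕ}
    (hsecant : ∀ l : L, x ∈ l → {y ∈ S | y ∈ l}.ncard ≤ q + 1) :
    (tsec L S x 1 : ℚ) + tsec L S x 3 / 3 ≤ pointWeight L q S x := by
  simpa using sum_tsec_div_le_pointWeight hsecant (s := {1, 3}) (by decide)

lemma tsec_eq_sum_ite [Fintype {l : L // x ∈ l}] (i : ℕ) :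
    tsec L S x i = ∑ m : {l : L // x ∈ l}, if {y ∈ S | y ∈ m.1}.ncard = i then 1 else 0 := by
  have himage : {l : L | x ∈ l ∧ {y ∈ S | y ∈ l}.ncard = i} =
      Subtype.val '' {m : {l : L // x ∈ l} | {y ∈ S | y ∈ m.1}.ncard = i} := by
    ext l
    simp [and_comm]
  rw [tsec, himage, Set.ncard_image_of_injective _ Subtype.val_injective, Finset.sum_boole,
    ← Set.ncard_coe_finset]
  simp

end Weight

section HasLines

variable {P L : Type*} [Membership P L] [HasLines P L] {S : Set P} {x : P}

lemma sum_ncard_secant_sdiff_singleton [Fintype {l : L // x ∈ l}] (hS : S.Finite) :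
    ∑ m : {l : L // x ∈ l}, ({y ∈ S | y ∈ m.1} \ {x}).ncard = (S \ {x}).ncard := by
  have hcover : ⋃ m : {l : L // x ∈ l}, {y ∈ S | y ∈ m.1} \ {x} = S \ {x} := by
    ext y
    simp only [Set.mem_iUnion]
    refine ⟨fun ⟨_, hy, hyx⟩ => ⟨hy.1, hyx⟩, fun ⟨hy, hyx⟩ => ?_⟩
    obtain ⟨l, ⟨hxl, hyl⟩, -⟩ := HasLines.existsUnique_line P L x y (Ne.symm hyx)
    exact ⟨⟨l, hxl⟩, ⟨hy, hyl⟩, hyx⟩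
  have hdisjoint : Pairwise (Function.onFun Disjoint
      fun m : {l : L // x ∈ l} => {y ∈ S | y ∈ m.1} \ {x}) := fun m m' hmm' =>
    Set.disjoint_left.mpr fun y hy hy' => hmm' <| Subtype.ext <|
      (Nondegenerate.eq_or_eq hy.1.2 m.2 hy'.1.2 m'.2).resolve_left hy.2
  rw [← hcover, Set.ncard_iUnion_of_finite
    (fun _ => hS.subset fun _ hy => hy.1.1) hdisjoint, finsum_eq_sum_of_fintype]

lemma sum_ncard_secant_add_one [Fintype {l : L // x ∈ l}] (hS : S.Finite) (hx : x ∈ S) :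
    (∑ m : {l : L // x ∈ l}, {y ∈ S | y ∈ m.1}.ncard) + 1 = S.ncard + lineCount L x := by
  have hsecant (m : {l : L // x ∈ l}) :
      {y ∈ S | y ∈ m.1}.ncard = ({y ∈ S | y ∈ m.1} \ {x}).ncard + 1 :=
    (Set.ncard_sdiff_singleton_add_one (s := {y ∈ S | y ∈ m.1}) ⟨hx, m.2⟩
      (hS.subset fun _ hy => hy.1)).symm
  have hlines : lineCount L x = Fintype.card {l : L // x ∈ l} := Nat.card_eq_fintype_card
  simp only [hsecant, Finset.sum_add_distrib, sum_ncard_secant_sdiff_singleton hS,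
    ← Set.ncard_sdiff_singleton_add_one hx hS, Finset.sum_const, Finset.card_univ, smul_eq_mul,
    mul_one, hlines]
  ring

-- The subtraction truncates: the tangents contribute `0` to the sum, not `-1`.
lemma sum_ncard_secant_sub_two_le_tsec_one [Fintype {l : L // x ∈ l}] (hS : S.Finite)
    (hx : x ∈ S) (hsize : S.ncard ≤ lineCount L x + 1) :
    ∑ m : {l : L // x ∈ l}, ({y ∈ S | y ∈ m.1}.ncard - 2) ≤ tsec L S x 1 := by
  have hsecant (m : {l : L // x ∈ l}) : {y ∈ S | y ∈ m.1}.ncard - 2 + 2 =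
      {y ∈ S | y ∈ m.1}.ncard + if {y ∈ S | y ∈ m.1}.ncard = 1 then 1 else 0 := by
    have hpos : 0 < {y ∈ S | y ∈ m.1}.ncard :=
      (Set.ncard_pos (hS.subset fun _ hy => hy.1)).mpr ⟨x, hx, m.2⟩
    split_ifs <;> lia
  have hsum := Finset.sum_congr rfl fun m (_ : m ∈ Finset.univ) => hsecant m
  have hcount := sum_ncard_secant_add_one (L := L) hS hx
  have hlines : lineCount L x = Fintype.card {l : L // x ∈ l} := Nat.card_eq_fintype_card
  rw [Finset.sum_add_distrib, Finset.sum_add_distrib, ← tsec_eq_sum_ite, Finset.sum_const,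
    Finset.card_univ, smul_eq_mul] at hsum
  lia

lemma ncard_secant_le_tsec_one_add_two [Finite {l : L // x ∈ l}] (hS : S.Finite) (hx : x ∈ S)
    (hsize : S.ncard ≤ lineCount L x + 1) {l : L} (hl : x ∈ l) :
    {y ∈ S | y ∈ l}.ncard ≤ tsec L S x 1 + 2 := by
  have := Fintype.ofFinite {l : L // x ∈ l}
  refine Nat.sub_le_iff_le_add.mp <| le_trans ?_ (sum_ncard_secant_sub_two_le_tsec_one hS hx hsize)
  exact Finset.single_le_sum (f := fun m : {l : L // x ∈ l} => {y ∈ S | y ∈ m.1}.ncard - 2)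
    (fun _ _ => Nat.zero_le _) (Finset.mem_univ ⟨l, hl⟩)

lemma tsec_three_le_tsec_one [Finite {l : L // x ∈ l}] (hS : S.Finite) (hx : x ∈ S)
    (hsize : S.ncard ≤ lineCount L x + 1) : tsec L S x 3 ≤ tsec L S x 1 := by
  have := Fintype.ofFinite {l : L // x ∈ l}
  calc tsec L S x 3
      = ∑ m : {l : L // x ∈ l}, if {y ∈ S | y ∈ m.1}.ncard = 3 then 1 else 0 := tsec_eq_sum_ite 3
    _ ≤ ∑ m : {l : L // x ∈ l}, ({y ∈ S | y ∈ m.1}.ncard - 2) :=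
        Finset.sum_le_sum fun m _ => by split_ifs <;> lia
    _ ≤ tsec L S x 1 := sum_ncard_secant_sub_two_le_tsec_one hS hx hsize

end HasLines

section Order

variable {P L : Type*} [Membership P L]

lemma finite_lines_through_of_notMem [HasPoints P L] {x : P} {l : L} (hxl : x ∉ l)
    [Finite {y : P // y ∈ l}] : Finite {m : L // x ∈ m} := by
  have hne (m : {m : L // x ∈ m}) : m.1 ≠ l := fun h => hxl (h ▸ m.2)
  let meet (m : {m : L // x ∈ m}) : {y : P // y ∈ l} :=
    ⟨HasPoints.mkPoint (hne m), (HasPoints.mkPoint_ax (hne m)).2⟩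
  have hmeet (m : {m : L // x ∈ m}) : (meet m).1 ∈ m.1 := (HasPoints.mkPoint_ax (hne m)).1
  refine Finite.of_injective meet fun m m' h => Subtype.ext ?_
  exact (Nondegenerate.eq_or_eq m.2 (hmeet m) m'.2 (h ▸ hmeet m')).resolve_left
    fun hx => hxl (hx ▸ (meet m).2)

lemma order_add_one_le_lineCount [ProjectivePlane P L] {q : ℕ}
    (horder : ∀ l : L, {y : P | y ∈ l}.ncard = q + 1) (x : P) : q + 1 ≤ lineCount L x := by
  obtain ⟨l, hxl⟩ := Nondegenerate.exists_line (L := L) x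
  have : Finite {y : P // y ∈ l} :=
    Set.finite_of_ncard_ne_zero ((horder l).trans_ne q.succ_ne_zero)
  have : Finite {m : L // x ∈ m} := finite_lines_through_of_notMem hxl
  exact (horder l).ge.trans (HasLines.pointCount_le_lineCount hxl)

lemma ncard_secant_le_order_add_one {q : ℕ} {l : L} (hl : {y : P | y ∈ l}.ncard = q + 1)
    (S : Set P) : {y ∈ S | y ∈ l}.ncard ≤ q + 1 :=
  (Set.ncard_le_ncard (fun _ hy => hy.2) (Set.finite_of_ncard_ne_zero (by simp [hl]))).trans_eq hl

end Order

theorem stmt_12_general {P L : Type*} [Membership P L] [HasLines P L] {q : ℕ} {S : Set P}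
    (hS : S.Finite) {x : P} (hx : x ∈ S) [Finite {l : L // x ∈ l}]
    (hsize : S.ncard ≤ lineCount L x + 1)
    (hsecant : ∀ l : L, x ∈ l → {y ∈ S | y ∈ l}.ncard ≤ q + 1) :
    (∀ k : ℕ, (∃ l : L, x ∈ l ∧ {y ∈ S | y ∈ l}.ncard = k) →
      (k : ℚ) - 2 ≤ pointWeight L q S x) ∧
    (∀ k : ℕ, k ≤ tsec L S x 3 → (4 / 3 : ℚ) * (k : ℚ) ≤ pointWeight L q S x) := by
  have hweight := tsec_one_add_tsec_three_div_le_pointWeight hsecant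
  constructor
  · rintro k ⟨l, hl, rfl⟩
    have htan : ({y ∈ S | y ∈ l}.ncard : ℚ) ≤ tsec L S x 1 + 2 := by
      exact_mod_cast ncard_secant_le_tsec_one_add_two hS hx hsize hl
    have hnonneg : (0 : ℚ) ≤ tsec L S x 3 / 3 := by positivity
    linarith
  · intro k hk
    have hk' : (k : ℚ) ≤ tsec L S x 3 := by exact_mod_cast hk
    have htri : (tsec L S x 3 : ℚ) ≤ tsec L S x 1 := by
      exact_mod_cast tsec_three_le_tsec_one hS hx hsize
    linarith

/-- Let `S` be a point set of size `q + 2` in a projective plane of order `q` (every line has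
exactly `q + 1` points) and let `x ∈ S`.
(1) If `x` is contained in a `k`-secant of `S`, then `w(x) ≥ k − 2`.
(2) If `x` is contained in at least `k` trisecants of `S`, then `w(x) ≥ (4/3)·k`. -/
theorem stmt_12 {P L : Type*} [Membership P L] [Configuration.ProjectivePlane P L]
    (q : ℕ) (horder : ∀ l : L, {y : P | y ∈ l}.ncard = q + 1)
    (S : Set P) (hsize : S.ncard = q + 2) (x : P) (hx : x ∈ S) :
    (∀ k : ℕ, (∃ l : L, x ∈ l ∧ {y ∈ S | y ∈ l}.ncard = k) →
      (k : ℚ) - 2 ≤ pointWeight L q S x) ∧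
    (∀ k : ℕ, k ≤ tsec L S x 3 → (4 / 3 : ℚ) * (k : ℚ) ≤ pointWeight L q S x) := by
  have hlines : q + 1 ≤ lineCount L x := order_add_one_le_lineCount horder x
  have : Finite {l : L // x ∈ l} := (Nat.card_pos_iff.mp (q.succ_pos.trans_le hlines)).2
  exact stmt_12_general (Set.finite_of_ncard_ne_zero (by simp [hsize])) hx (by lia)
    fun l _ => ncard_secant_le_order_add_one (horder l) S
end

section
/- Let S be a point set of size q + k in PG(2,q) for some k ≥ 3. Suppose that ℓ₁ is a k-secant of S all of whose points of S ∩ ℓ₁ have type (2_q, k_1). Then all the k-secants of S that contain at least one point of type (2_q, k_1) are concurrent. -/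
/-! Common setup: the Desarguesian projective plane `PG(2,q)` over a finite field `F = GF(q)`.
Points are the projective points of `F³`; lines are the 2-dimensional linear subspaces of `F³`,
with incidence given by containment. -/

/-- Points of `PG(2,F)`. -/
abbrev PGPoint (F : Type*) [Field F] := Projectivization F (Fin 3 → F)

/-- Lines of `PG(2,F)`: the 2-dimensional linear subspaces of `F³`. -/
abbrev PGLine (F : Type*) [Field F] := {W : Submodule F (Fin 3 → F) // Module.finrank F W = 2}

/-- Incidence between a point and a line of `PG(2,F)`. -/
def pgMem {F : Type*} [Field F] (P : PGPoint F) (L : PGLine F) : Prop :=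
  P.submodule ≤ L.val

/-- The number of points of the point set `B` lying on the line `L`;
`L` is a *`k`-secant* of `B` if `nsec B L = k`, a *tangent* if `k = 1`,
a *bisecant* if `k = 2` and a *trisecant* if `k = 3`. -/
noncomputable def nsec {F : Type*} [Field F] (B : Set (PGPoint F)) (L : PGLine F) : ℕ :=
  {P ∈ B | pgMem P L}.ncard

/-- A blocking set: a point set meeting every line. -/
def isBlocking {F : Type*} [Field F] (B : Set (PGPoint F)) : Prop :=
  ∀ L : PGLine F, ∃ P ∈ B, pgMem P L

/-- A minimal blocking set: every point is essential. -/
def isMinimalBlocking {F : Type*} [Field F] (B : Set (PGPoint F)) : Prop :=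
  isBlocking B ∧ ∀ P ∈ B, ¬ isBlocking (B \ {P})

/-- `B` is a blocking set of Rédei type with Rédei line `ℓ`: a blocking set of size
`q + N ≤ 2q` such that `ℓ` meets `B` in exactly `N = |B| − q` points. -/
def isRedeiWithLine {F : Type*} [Field F] (q : ℕ) (B : Set (PGPoint F)) (ℓ : PGLine F) : Prop :=
  isBlocking B ∧ B.ncard ≤ 2 * q ∧ nsec B ℓ + q = B.ncard

/-- A semioval: through each of its points there passes exactly one tangent. -/
def isSemioval {F : Type*} [Field F] (S : Set (PGPoint F)) : Prop :=
  ∀ P ∈ S, ∃! t : PGLine F, pgMem P t ∧ nsec S t = 1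

/-- The point `P ∈ S` has type `(2_q, k_1)`: among the `q + 1` lines through `P`, exactly `q`
are bisecants of `S` and exactly one is a `k`-secant of `S`. -/
def hasType2qk1 {F : Type*} [Field F] (q k : ℕ) (S : Set (PGPoint F)) (P : PGPoint F) : Prop :=
  {L : PGLine F | pgMem P L ∧ nsec S L = 2}.ncard = q ∧
  {L : PGLine F | pgMem P L ∧ nsec S L = k}.ncard = 1

/-! Take `ℓ₁` as the line at infinity; the `q` points of `S` off `ℓ₁` form an affine point set `U`.
A point of `S ∩ ℓ₁` lies on no further `k`-secant, so it is not a direction determined by `U`. If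
`P ∈ U` has type `(2_q, k_1)` and its `k`-secant meets `ℓ₁` in `R`, then each direction in `ℓ₁ \ S`
contains exactly one further point of `U` as seen from `P`, except that `R` contains `k - 1`.

Let `f` be a linear functional vanishing at `t ∈ S ∩ ℓ₁` but not on `ℓ₁`. It is injective on `U`, so
the differences `f Q - f P`, `Q ∈ U \ {P}`, run over the nonzero scalars and their product does not
depend on `P`. Comparing, in the spirit of Segre's lemma of tangents, how this product factors along
the directions seen from two such points, with `k`-secants meeting `ℓ₁` in `R₁` and `R₂`, shows that
`(f R₁ / f R₂) ^ (k - 2)` is the same for all `t`. If `R₁ ≠ R₂`, then the ratio `f R₁ / f R₂`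
determines `t`, so it takes `k` values; yet it is always a root of the same polynomial
`X ^ (k - 2) - c`. -/

open Module (Dual finrank finrank_fin_fun)
open Projectivization
open scoped LinearAlgebra.Projectivization

section Rings

variable {R ι : Type*} [CommRing R]

theorem card_le_of_injOn_of_pow_eq [IsDomain R] {T : Finset ι} {g : ι → R}
    (hg : Set.InjOn g T) {n : ℕ} (hn : n ≠ 0) {c : R} (hc : ∀ t ∈ T, g t ^ n = c) : T.card ≤ n := by
  classical
  calc T.card ≤ (Polynomial.nthRoots n c).toFinset.card :=
        Finset.card_le_card_of_injOn g (fun t ht => Multiset.mem_toFinset.2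
          ((Polynomial.mem_nthRoots (Nat.pos_of_ne_zero hn)).2 (hc t ht))) hg
    _ ≤ (Polynomial.nthRoots n c).card := Multiset.toFinset_card_le _
    _ ≤ n := Polynomial.card_nthRoots n c

theorem prod_erase_sub_eq_prod_erase_zero [Fintype R] [DecidableEq R] [DecidableEq ι]
    {U : Finset ι} (hU : U.card = Fintype.card R) {g : ι → R} (hg : Set.InjOn g U) {P : ι}
    (hP : P ∈ U) : ∏ Q ∈ U.erase P, (g Q - g P) = ∏ x ∈ Finset.univ.erase (0 : R), x := by
  have hinj : Set.InjOn (fun Q => g Q - g P) (U.erase P) := fun Q hQ Q' hQ' h =>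
    hg (Finset.mem_of_mem_erase hQ) (Finset.mem_of_mem_erase hQ') (sub_left_injective h)
  have himage : (U.erase P).image (fun Q => g Q - g P) = Finset.univ.erase 0 := by
    refine Finset.eq_of_subset_of_card_le (Finset.image_subset_iff.2 fun Q hQ => ?_) ?_
    · obtain ⟨hQP, hQ⟩ := Finset.mem_erase.1 hQ
      exact Finset.mem_erase.2 ⟨sub_ne_zero.2 (hg.ne hQ hP hQP), Finset.mem_univ _⟩
    · rw [Finset.card_image_of_injOn hinj, Finset.card_erase_of_mem hP, hU,
        Finset.card_erase_of_mem (Finset.mem_univ _), Finset.card_univ]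
  rw [← himage, Finset.prod_image hinj]

end Rings

section Subspaces

variable {F V : Type*} [Field F] [AddCommGroup V] [Module F V]

theorem mk_submodule_le_iff {v : V} {hv : v ≠ 0} {W : Submodule F V} :
    (mk F v hv).submodule ≤ W ↔ v ∈ W := by
  rw [submodule_mk, Submodule.span_singleton_le_iff_mem]

theorem submodule_le_iff_rep_mem {P : ℙ F V} {W : Submodule F V} :
    P.submodule ≤ W ↔ P.rep ∈ W := by
  rw [submodule_eq, Submodule.span_singleton_le_iff_mem]

theorem mk_eq_of_mem_submodule {v : V} (hv : v ≠ 0) {P : ℙ F V} (h : v ∈ P.submodule) :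
    mk F v hv = P := by
  rw [submodule_eq, Submodule.mem_span_singleton] at h
  rw [← P.mk_rep, mk_eq_mk_iff']
  exact h

theorem inf_eq_submodule_of_not_le {W W' : Submodule F V} (hW : finrank F W = 2) {P : ℙ F V}
    (hPW : P.submodule ≤ W) (hPW' : P.submodule ≤ W') (hWW' : ¬ W ≤ W') :
    W ⊓ W' = P.submodule := by
  have : Module.Finite F W := Module.finite_of_finrank_eq_succ hW
  have hlt : finrank F ↥(W ⊓ W') < finrank F W :=
    Submodule.finrank_lt_finrank_of_lt (inf_lt_left.2 hWW')
  refine (Submodule.eq_of_le_of_finrank_le (le_inf hPW hPW') ?_).symm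
  rw [finrank_submodule]
  omega

theorem eq_of_apply_div_apply_eq {W : Submodule F V} {m₁ m₂ t t' : ℙ F V} (hm : m₁ ≠ m₂)
    (hm₁ : m₁.submodule ≤ W) (hm₂ : m₂.submodule ≤ W) {f f' : Dual F V}
    (hf : W ⊓ LinearMap.ker f = t.submodule) (hf' : W ⊓ LinearMap.ker f' = t'.submodule)
    (hfm : f m₂.rep ≠ 0) (hfm' : f' m₂.rep ≠ 0)
    (h : f m₁.rep / f m₂.rep = f' m₁.rep / f' m₂.rep) : t = t' := by
  set r := f m₁.rep / f m₂.rep with hr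
  have hv : m₁.rep - r • m₂.rep ≠ 0 := by
    intro h0
    refine hm ?_
    rw [← m₁.mk_rep, ← m₂.mk_rep, mk_eq_mk_iff']
    exact ⟨r, (sub_eq_zero.1 h0).symm⟩
  have hvW : m₁.rep - r • m₂.rep ∈ W :=
    W.sub_mem (submodule_le_iff_rep_mem.1 hm₁) (W.smul_mem _ (submodule_le_iff_rep_mem.1 hm₂))
  have hvt : m₁.rep - r • m₂.rep ∈ t.submodule := by
    rw [← hf]
    exact ⟨hvW, by simp [hr, hfm]⟩
  have hvt' : m₁.rep - r • m₂.rep ∈ t'.submodule := by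
    rw [← hf']
    exact ⟨hvW, by simp [h, hfm']⟩
  rw [← mk_eq_of_mem_submodule hv hvt, mk_eq_of_mem_submodule hv hvt']

end Subspaces

section Directions

variable {F V : Type*} [Field F] [AddCommGroup V] [Module F V]

variable (F) in
open scoped Classical in
/-- The multiset of directions, as points at infinity, in which the point `P` sees the other points
of the affine point set `U`. -/
noncomputable def directions (U : Finset V) (P : V) : Multiset (ℙ F V) :=
  (U.erase P).attach.val.map fun Q => mk F (Q.1 - P) (sub_ne_zero.2 (Finset.ne_of_mem_erase Q.2))

theorem mem_directions {U : Finset V} {P : V} {s : ℙ F V} :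
    s ∈ directions F U P ↔ ∃ Q ∈ U, Q ≠ P ∧ Q - P ∈ s.submodule := by
  simp only [directions, Multiset.mem_map, Finset.mem_val, Finset.mem_attach, true_and,
    Subtype.exists, Finset.mem_erase]
  constructor
  · rintro ⟨Q, ⟨hQP, hQ⟩, rfl⟩
    exact ⟨Q, hQ, hQP, mk_submodule_le_iff.1 le_rfl⟩
  · rintro ⟨Q, hQ, hQP, hs⟩
    exact ⟨Q, ⟨hQP, hQ⟩, mk_eq_of_mem_submodule _ hs⟩

open scoped Classical in
theorem count_directions_add_one {U : Finset V} {P : V} (hP : P ∈ U) (s : ℙ F V) :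
    (directions F U P).count s + 1 = {Q ∈ U | Q - P ∈ s.submodule}.card := by
  have hmk (Q : U.erase P) :
      s = mk F (Q.1 - P) (sub_ne_zero.2 (Finset.ne_of_mem_erase Q.2)) ↔ Q.1 - P ∈ s.submodule := by
    refine ⟨?_, fun h => (mk_eq_of_mem_submodule _ h).symm⟩
    rintro rfl
    exact mk_submodule_le_iff.1 le_rfl
  have hcount : (directions F U P).count s = {Q ∈ U.erase P | Q - P ∈ s.submodule}.card := by
    simp only [directions, Multiset.count_map, ← Finset.filter_val, Finset.card_val, hmk]
    rw [Finset.filter_attach (fun Q => Q - P ∈ s.submodule), Finset.card_map, Finset.card_attach]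
  rw [hcount, ← Finset.insert_erase hP, Finset.filter_insert, if_pos (by simp),
    Finset.card_insert_of_notMem (by simp), Finset.erase_insert (by simp)]

theorem submodule_le_of_mem_directions {U : Finset V} {W : Submodule F V}
    (hUW : ∀ P ∈ U, ∀ Q ∈ U, Q - P ∈ W) {P : V} (hP : P ∈ U) {s : ℙ F V}
    (hs : s ∈ directions F U P) : s.submodule ≤ W := by
  obtain ⟨Q, hQ, hQP, hQs⟩ := mem_directions.1 hs
  rw [← mk_eq_of_mem_submodule (sub_ne_zero.2 hQP) hQs]
  exact mk_submodule_le_iff.2 (hUW P hP Q hQ)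

open scoped Classical in
theorem exists_prod_erase_eq_mul_prod_directions (U : Finset V) (P : V) :
    ∃ c : F, ∀ f : Dual F V, ∏ Q ∈ U.erase P, (f Q - f P) =
      c * ((directions F U P).map fun s => f s.rep).prod := by
  have hne (Q : U.erase P) : (Q : V) - P ≠ 0 := sub_ne_zero.2 (Finset.ne_of_mem_erase Q.2)
  choose a ha using fun Q : U.erase P => exists_smul_eq_mk_rep F (Q - P : V) (hne Q)
  refine ⟨∏ Q, (((a Q)⁻¹ : Fˣ) : F), fun f => ?_⟩
  have hmap : ((directions F U P).map fun s => f s.rep).prod =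
      ∏ Q : U.erase P, f (mk F (Q - P : V) (hne Q)).rep := by
    rw [directions, Multiset.map_map]
    rfl
  rw [hmap, ← Finset.prod_mul_distrib, ← Finset.prod_attach]
  refine Finset.prod_congr rfl fun Q _ => ?_
  rw [← ha Q, ← map_sub, Units.smul_def, map_smul, smul_eq_mul, Units.inv_mul_cancel_left]

theorem exists_apply_div_apply_pow_eq [Fintype F] {U : Finset V} (hU : U.card = Fintype.card F)
    {P₁ P₂ : V} (hP₁ : P₁ ∈ U) (hP₂ : P₂ ∈ U) {D : Multiset (ℙ F V)} {n : ℕ} {m₁ m₂ : ℙ F V}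
    (h₁ : directions F U P₁ = D + Multiset.replicate n m₁)
    (h₂ : directions F U P₂ = D + Multiset.replicate n m₂) :
    ∃ c : F, ∀ f : Dual F V, Set.InjOn f U → (f m₁.rep / f m₂.rep) ^ n = c := by
  classical
  obtain ⟨c₁, hc₁⟩ := exists_prod_erase_eq_mul_prod_directions (F := F) U P₁
  obtain ⟨c₂, hc₂⟩ := exists_prod_erase_eq_mul_prod_directions (F := F) U P₂
  refine ⟨c₂ / c₁, fun f hf => ?_⟩
  have e₁ := hc₁ f
  have e₂ := hc₂ f
  have hπ : ∏ x ∈ Finset.univ.erase (0 : F), x ≠ 0 :=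
    Finset.prod_ne_zero_iff.2 fun x hx => Finset.ne_of_mem_erase hx
  rw [prod_erase_sub_eq_prod_erase_zero hU hf hP₁, h₁, Multiset.map_add, Multiset.prod_add,
    Multiset.map_replicate, Multiset.prod_replicate] at e₁
  rw [prod_erase_sub_eq_prod_erase_zero hU hf hP₂, h₂, Multiset.map_add, Multiset.prod_add,
    Multiset.map_replicate, Multiset.prod_replicate] at e₂
  have hne₁ := mul_ne_zero_iff.1 (e₁ ▸ hπ)
  have hne₂ := mul_ne_zero_iff.1 (e₂ ▸ hπ)
  obtain ⟨hD, hm₂⟩ := mul_ne_zero_iff.1 hne₂.2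
  rw [div_pow, div_eq_div_iff hm₂ hne₁.1]
  refine mul_left_cancel₀ hD ?_
  linear_combination e₂ - e₁

theorem eq_of_directions_eq_add_replicate [Fintype F] {W : Submodule F V} (hW : finrank F W = 2)
    {U : Finset V} (hU : U.card = Fintype.card F) (hUW : ∀ P ∈ U, ∀ Q ∈ U, Q - P ∈ W)
    {T : Finset (ℙ F V)} (hTW : ∀ t ∈ T, t.submodule ≤ W)
    (hTU : ∀ P ∈ U, ∀ t ∈ T, t ∉ directions F U P) {n : ℕ} (hn : n ≠ 0) (hnT : n < T.card)
    {P₁ P₂ : V} (hP₁ : P₁ ∈ U) (hP₂ : P₂ ∈ U) {D : Multiset (ℙ F V)} {m₁ m₂ : ℙ F V}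
    (h₁ : directions F U P₁ = D + Multiset.replicate n m₁)
    (h₂ : directions F U P₂ = D + Multiset.replicate n m₂) : m₁ = m₂ := by
  by_contra hm
  have hm₁ : m₁ ∈ directions F U P₁ :=
    h₁ ▸ Multiset.mem_add.2 (.inr (Multiset.mem_replicate.2 ⟨hn, rfl⟩))
  have hm₂ : m₂ ∈ directions F U P₂ :=
    h₂ ▸ Multiset.mem_add.2 (.inr (Multiset.mem_replicate.2 ⟨hn, rfl⟩))
  have hm₁W := submodule_le_of_mem_directions hUW hP₁ hm₁
  have hm₂W := submodule_le_of_mem_directions hUW hP₂ hm₂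
  have hfunctional : ∀ t ∈ T, ∃ f : Dual F V, f m₂.rep ≠ 0 ∧ t.submodule ≤ LinearMap.ker f := by
    refine fun t ht => Submodule.exists_le_ker_of_notMem fun hmem => hTU P₂ hP₂ t ht ?_
    rwa [← mk_eq_of_mem_submodule m₂.rep_nonzero hmem, mk_rep]
  choose! f hfm hft using hfunctional
  have hker : ∀ t ∈ T, W ⊓ LinearMap.ker (f t) = t.submodule := fun t ht =>
    inf_eq_submodule_of_not_le hW (hTW t ht) (hft t ht) fun hle =>
      hfm t ht (hle (submodule_le_iff_rep_mem.1 hm₂W))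
  have hinj : ∀ t ∈ T, Set.InjOn (f t) U := by
    intro t ht Q hQ P hP hQP
    by_contra hne
    refine hTU P hP t ht (mem_directions.2 ⟨Q, hQ, hne, ?_⟩)
    rw [← hker t ht]
    exact ⟨hUW P hP Q hQ, by simp [hQP]⟩
  obtain ⟨c, hc⟩ := exists_apply_div_apply_pow_eq hU hP₁ hP₂ h₁ h₂
  refine hnT.not_ge (card_le_of_injOn_of_pow_eq (g := fun t => f t m₁.rep / f t m₂.rep) ?_ hn
    fun t ht => hc (f t) (hinj t ht))
  exact fun t ht t' ht' => eq_of_apply_div_apply_eq hm hm₁W hm₂W (hker t ht) (hker t' ht')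
    (hfm t ht) (hfm t' ht')

end Directions

section AffinePart

variable {F V : Type*} [Field F] [AddCommGroup V] [Module F V] [Finite V]

/-- The points of `S` off the hyperplane `φ = 0`, normalized to lie in the affine hyperplane
`φ = 1`. -/
noncomputable def affinePart (φ : Dual F V) (S : Set (ℙ F V)) : Finset V :=
  (Set.toFinite {v : V | φ v = 1 ∧ ∃ hv : v ≠ 0, mk F v hv ∈ S}).toFinset

variable {φ : Dual F V} {S : Set (ℙ F V)}

theorem mem_affinePart {v : V} :
    v ∈ affinePart φ S ↔ φ v = 1 ∧ ∃ hv : v ≠ 0, mk F v hv ∈ S := by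
  simp [affinePart]

theorem sub_mem_of_mem_affinePart {W : Submodule F V} (hφ : LinearMap.ker φ = W) :
    ∀ v ∈ affinePart φ S, ∀ w ∈ affinePart φ S, w - v ∈ W := by
  intro v hv w hw
  rw [← hφ, LinearMap.mem_ker, map_sub, (mem_affinePart.1 hv).1, (mem_affinePart.1 hw).1, sub_self]

theorem exists_mem_affinePart {P : ℙ F V} (hP : P ∈ S)
    (hPφ : ¬ P.submodule ≤ LinearMap.ker φ) :
    ∃ v ∈ affinePart φ S, ∃ hv : v ≠ 0, mk F v hv = P := by
  rw [submodule_le_iff_rep_mem, LinearMap.mem_ker] at hPφ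
  have hv : (φ P.rep)⁻¹ • P.rep ≠ 0 := smul_ne_zero (inv_ne_zero hPφ) P.rep_nonzero
  have hmk : mk F _ hv = P := by
    refine mk_eq_of_mem_submodule hv ?_
    rw [submodule_eq]
    exact Submodule.smul_mem _ _ (Submodule.mem_span_singleton_self _)
  exact ⟨_, mem_affinePart.2 ⟨by simp [hPφ], hv, by rwa [hmk]⟩, hv, hmk⟩

theorem card_affinePart (φ : Dual F V) (S : Set (ℙ F V)) :
    (affinePart φ S).card = (S \ {P | P.submodule ≤ LinearMap.ker φ}).ncard := by
  rw [← Set.ncard_coe_finset]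
  refine Set.ncard_congr (fun v hv => mk F v (mem_affinePart.1 hv).2.choose) ?_ ?_ ?_
  · intro v hv
    obtain ⟨hφv, _, hvS⟩ := mem_affinePart.1 hv
    refine ⟨hvS, fun hle => ?_⟩
    have hker : φ v = 0 := mk_submodule_le_iff.1 hle
    exact one_ne_zero (hφv.symm.trans hker)
  · intro v w hv hw hvw
    obtain ⟨a, rfl⟩ := (mk_eq_mk_iff' ..).1 hvw
    have ha : a = 1 := by
      have := (mem_affinePart.1 hv).1
      rwa [map_smul, (mem_affinePart.1 hw).1, smul_eq_mul, mul_one] at this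
    rw [ha, one_smul]
  · rintro P ⟨hP, hPφ⟩
    obtain ⟨v, hv, _, hmk⟩ := exists_mem_affinePart hP hPφ
    exact ⟨v, hv, hmk⟩

end AffinePart

section Plane

variable {F : Type*} [Field F]

theorem pgLine_eq_of_pgMem {P Q : PGPoint F} (hPQ : P ≠ Q) {L L' : PGLine F} (hPL : pgMem P L)
    (hQL : pgMem Q L) (hPL' : pgMem P L') (hQL' : pgMem Q L') : L = L' := by
  refine Subtype.ext (line_unique hPQ _ _ L.2 L'.2 ?_ ?_ ?_ ?_) <;>
    rwa [Submodule.mem_projectivization_iff_submodule_le]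

theorem exists_pgLine_pgMem_pgMem {P Q : PGPoint F} (hPQ : P ≠ Q) :
    ∃ L : PGLine F, pgMem P L ∧ pgMem Q L := by
  have hspan := finrank_span_eq_card (linearIndependent_pair_iff_ne.2 hPQ)
  refine ⟨⟨_, hspan.trans (Fintype.card_fin 2)⟩, ?_, ?_⟩
  · exact submodule_le_iff_rep_mem.2 (Submodule.subset_span ⟨0, rfl⟩)
  · exact submodule_le_iff_rep_mem.2 (Submodule.subset_span ⟨1, rfl⟩)

theorem exists_pgMem_pgMem (L L' : PGLine F) : ∃ P : PGPoint F, pgMem P L ∧ pgMem P L' := by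
  have hne : L.val ⊓ L'.val ≠ ⊥ := by
    intro hbot
    have hsum := Submodule.finrank_sup_add_finrank_inf_eq L.val L'.val
    have hle := Submodule.finrank_le (L.val ⊔ L'.val)
    rw [finrank_fin_fun] at hle
    rw [hbot, finrank_bot, L.2, L'.2] at hsum
    omega
  obtain ⟨v, hv, hv0⟩ := Submodule.exists_mem_ne_zero_of_ne_bot hne
  exact ⟨mk F v hv0, mk_submodule_le_iff.2 hv.1, mk_submodule_le_iff.2 hv.2⟩

theorem pgLine_eq_of_le {L L' : PGLine F} (h : L.val ≤ L'.val) : L = L' :=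
  Subtype.ext (Submodule.eq_of_le_of_finrank_eq h (L.2.trans L'.2.symm))

theorem inf_eq_submodule_of_ne {L L' : PGLine F} (hne : L ≠ L') {P : PGPoint F}
    (hL : pgMem P L) (hL' : pgMem P L') : L.val ⊓ L'.val = P.submodule :=
  inf_eq_submodule_of_not_le L.2 hL hL' fun h => hne (pgLine_eq_of_le h)

theorem finrank_ker_eq_two {φ : Dual F (Fin 3 → F)} (hφ : φ ≠ 0) :
    finrank F (LinearMap.ker φ) = 2 := by
  have h := Module.Dual.finrank_ker_add_one_of_ne_zero hφ
  rw [finrank_fin_fun] at h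
  omega

theorem exists_ker_eq (L : PGLine F) : ∃ φ : Dual F (Fin 3 → F), LinearMap.ker φ = L.val := by
  have hlt : L.val < ⊤ := by
    refine lt_top_iff_ne_top.2 fun h => ?_
    have := L.2
    rw [h, finrank_top, finrank_fin_fun] at this
    omega
  obtain ⟨φ, hφ, hle⟩ := L.val.exists_le_ker_of_lt_top hlt
  have hdim := L.2.trans (finrank_ker_eq_two hφ).symm
  exact ⟨φ, (Submodule.eq_of_le_of_finrank_eq hle hdim).symm⟩

theorem exists_not_pgMem (P : PGPoint F) : ∃ L : PGLine F, ¬ pgMem P L := by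
  obtain ⟨φ, hφP, -⟩ := Submodule.exists_le_ker_of_notMem (p := (⊥ : Submodule F (Fin 3 → F)))
    (mt (Submodule.mem_bot F).1 P.rep_nonzero)
  have hφ : φ ≠ 0 := fun h => hφP (by simp [h])
  exact ⟨⟨_, finrank_ker_eq_two hφ⟩, fun h => hφP (submodule_le_iff_rep_mem.1 h)⟩

theorem ncard_setOf_pgMem [Fintype F] (L : PGLine F) :
    {P : PGPoint F | pgMem P L}.ncard = Fintype.card F + 1 := by
  have hrange : {P : PGPoint F | pgMem P L} =
      Set.range (Projectivization.map L.val.subtype L.val.subtype_injective) := by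
    ext P
    constructor
    · intro hP
      have hrep : (⟨P.rep, submodule_le_iff_rep_mem.1 hP⟩ : L.val) ≠ 0 := fun h =>
        P.rep_nonzero (congrArg Subtype.val h)
      refine ⟨mk F _ hrep, ?_⟩
      simp only [map_mk, Submodule.subtype_apply, mk_rep]
    · rintro ⟨Q, rfl⟩
      induction Q using Projectivization.ind with
      | h v hv => exact mk_submodule_le_iff.2 v.2
  rw [hrange, ← Nat.card_coe_set_eq, Nat.card_range_of_injective (map_injective _ _),
    card_of_finrank_two F L.val L.2, Nat.card_eq_fintype_card]

theorem ncard_setOf_pgLine_le [Fintype F] (P : PGPoint F) :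
    {L : PGLine F | pgMem P L}.ncard ≤ Fintype.card F + 1 := by
  obtain ⟨ℓ, hPℓ⟩ := exists_not_pgMem P
  choose X hXL hXℓ using fun L => exists_pgMem_pgMem L ℓ
  rw [← ncard_setOf_pgMem ℓ]
  refine Set.ncard_le_ncard_of_injOn X (fun L _ => hXℓ L) fun L hL L' hL' hX => ?_
  have hPX : P ≠ X L := fun h => hPℓ (h ▸ hXℓ L)
  exact pgLine_eq_of_pgMem hPX hL (hXL L) hL' (hX ▸ hXL L')

end Plane

namespace hasType2qk1

variable {F : Type*} [Field F] {k : ℕ} {S : Set (PGPoint F)} {P : PGPoint F} {L m : PGLine F}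

theorem eq_of_nsec_eq {q : ℕ} (hP : hasType2qk1 q k S P) (hL : pgMem P L) (hm : pgMem P m)
    (hLk : nsec S L = k) (hmk : nsec S m = k) : L = m := by
  obtain ⟨A, hA⟩ := Set.ncard_eq_one.1 hP.2
  have hLA : L ∈ ({A} : Set (PGLine F)) := hA ▸ ⟨hL, hLk⟩
  have hmA : m ∈ ({A} : Set (PGLine F)) := hA ▸ ⟨hm, hmk⟩
  exact hLA.trans hmA.symm

theorem nsec_eq_two [Fintype F] (hP : hasType2qk1 (Fintype.card F) k S P) (hk : k ≠ 2)
    (hL : pgMem P L) (hLk : nsec S L ≠ k) : nsec S L = 2 := by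
  have hdisj : Disjoint {L : PGLine F | pgMem P L ∧ nsec S L = 2}
      {L : PGLine F | pgMem P L ∧ nsec S L = k} :=
    Set.disjoint_left.2 fun M h2 hMk => hk (hMk.2.symm.trans h2.2)
  have hunion : {L : PGLine F | pgMem P L ∧ nsec S L = 2} ∪
      {L : PGLine F | pgMem P L ∧ nsec S L = k} = {L : PGLine F | pgMem P L} := by
    refine Set.eq_of_subset_of_ncard_le (Set.union_subset (fun _ h => h.1) fun _ h => h.1) ?_
    rw [Set.ncard_union_eq hdisj, hP.1, hP.2]
    exact ncard_setOf_pgLine_le P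
  have hmem : L ∈ {L : PGLine F | pgMem P L} := hL
  rw [← hunion] at hmem
  exact hmem.elim And.right fun h => absurd h.2 hLk

end hasType2qk1

theorem notMem_of_pgMem_of_nsec_eq {F : Type*} [Field F] {q k : ℕ} {S : Set (PGPoint F)}
    {ℓ m : PGLine F} (hℓ : nsec S ℓ = k) (htype : ∀ P ∈ S, pgMem P ℓ → hasType2qk1 q k S P)
    (hmℓ : m ≠ ℓ) (hm : nsec S m = k) {P : PGPoint F} (hPm : pgMem P m) (hPℓ : pgMem P ℓ) :
    P ∉ S := fun hPS =>
  hmℓ ((htype P hPS hPℓ).eq_of_nsec_eq hPm hPℓ hm hℓ)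

section Secants

variable {F : Type*} [Field F] [Finite F] {S : Set (PGPoint F)} {ℓ : PGLine F}
  {φ : Dual F (Fin 3 → F)}

theorem card_affinePart_add_nsec (hφ : LinearMap.ker φ = ℓ.val) (S : Set (PGPoint F)) :
    (affinePart φ S).card + nsec S ℓ = S.ncard := by
  rw [card_affinePart, hφ, add_comm]
  exact Set.ncard_inter_add_ncard_sdiff_eq_ncard S {P | pgMem P ℓ}

theorem ne_of_mem_affinePart (hφ : LinearMap.ker φ = ℓ.val) {p : Fin 3 → F}
    (hp : p ∈ affinePart φ S) {L : PGLine F} (hpL : p ∈ L.val) : L ≠ ℓ := by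
  rintro rfl
  rw [← hφ, LinearMap.mem_ker, (mem_affinePart.1 hp).1] at hpL
  exact one_ne_zero hpL

theorem mk_ne_of_mem_affinePart (hφ : LinearMap.ker φ = ℓ.val) {p : Fin 3 → F}
    (hp : p ∈ affinePart φ S) {hp0 : p ≠ 0} {X : PGPoint F} (hX : pgMem X ℓ) :
    mk F p hp0 ≠ X := by
  rintro rfl
  exact ne_of_mem_affinePart hφ hp (mk_submodule_le_iff.1 hX) rfl

theorem exists_pgLine_mem_pgMem (hφ : LinearMap.ker φ = ℓ.val) {p : Fin 3 → F}
    (hp : p ∈ affinePart φ S) {X : PGPoint F} (hX : pgMem X ℓ) :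
    ∃ L : PGLine F, p ∈ L.val ∧ pgMem X L := by
  obtain ⟨-, hp0, -⟩ := mem_affinePart.1 hp
  obtain ⟨L, hpL, hXL⟩ := exists_pgLine_pgMem_pgMem (mk_ne_of_mem_affinePart hφ hp (hp0 := hp0) hX)
  exact ⟨L, mk_submodule_le_iff.1 hpL, hXL⟩

open scoped Classical in
theorem nsec_eq_count_directions_add (hφ : LinearMap.ker φ = ℓ.val) {p : Fin 3 → F}
    (hp : p ∈ affinePart φ S) {R : PGPoint F} (hRℓ : pgMem R ℓ) {L : PGLine F}
    (hpL : p ∈ L.val) (hRL : pgMem R L) :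
    nsec S L = (directions F (affinePart φ S) p).count R + 1 + if R ∈ S then 1 else 0 := by
  have hinf : L.val ⊓ ℓ.val = R.submodule :=
    inf_eq_submodule_of_ne (ne_of_mem_affinePart hφ hp hpL) hRL hRℓ
  have haffine : affinePart φ {X ∈ S | pgMem X L} =
      {v ∈ affinePart φ S | v - p ∈ R.submodule} := by
    ext v
    have hmem (hv : φ v = 1) : v ∈ L.val ↔ v - p ∈ R.submodule := by
      rw [← hinf, Submodule.mem_inf, Submodule.sub_mem_iff_left _ hpL, ← hφ]
      simp [hv, (mem_affinePart.1 hp).1]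
    simp only [Finset.mem_filter, mem_affinePart, Set.mem_ofPred_eq, pgMem, mk_submodule_le_iff]
    grind
  have hinfinity : nsec {X ∈ S | pgMem X L} ℓ = if R ∈ S then 1 else 0 := by
    have hinter (X : PGPoint F) : pgMem X L ∧ pgMem X ℓ ↔ X = R := by
      refine ⟨fun h => ?_, fun h => h ▸ ⟨hRL, hRℓ⟩⟩
      by_contra hne
      exact ne_of_mem_affinePart hφ hp hpL (pgLine_eq_of_pgMem hne h.1 hRL h.2 hRℓ)
    simp only [nsec, Set.mem_ofPred_eq, and_assoc, hinter]
    split_ifs with hRS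
    · rw [(Set.ext fun X => and_iff_right_of_imp (· ▸ hRS) :
        {X | X ∈ S ∧ X = R} = {R}), Set.ncard_singleton]
    · rw [(Set.ext fun X => iff_of_false (fun h => hRS (h.2 ▸ h.1)) id :
        {X | X ∈ S ∧ X = R} = ∅), Set.ncard_empty]
  rw [count_directions_add_one hp, ← haffine, ← hinfinity]
  exact (card_affinePart_add_nsec hφ _).symm

end Secants

section TypedSecant

variable {F : Type*} [Field F] [Fintype F] {k : ℕ} {S : Set (PGPoint F)} {ℓ : PGLine F}
  {φ : Dual F (Fin 3 → F)}

theorem notMem_directions_of_mem (hk : k ≠ 2) (hφ : LinearMap.ker φ = ℓ.val) (hℓ : nsec S ℓ = k)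
    (htype : ∀ P ∈ S, pgMem P ℓ → hasType2qk1 (Fintype.card F) k S P) {p : Fin 3 → F}
    (hp : p ∈ affinePart φ S) {X : PGPoint F} (hXS : X ∈ S) (hX : pgMem X ℓ) :
    X ∉ directions F (affinePart φ S) p := by
  classical
  obtain ⟨L, hpL, hXL⟩ := exists_pgLine_mem_pgMem hφ hp hX
  have hLk : nsec S L ≠ k := fun h => notMem_of_pgMem_of_nsec_eq hℓ htype
    (ne_of_mem_affinePart hφ hp hpL) h hXL hX hXS
  have hcount := nsec_eq_count_directions_add hφ hp hX hpL hXL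
  rw [(htype X hXS hX).nsec_eq_two hk hXL hLk, if_pos hXS] at hcount
  exact Multiset.count_eq_zero.1 (by omega)

theorem directions_affinePart_eq (hk : 3 ≤ k) (hφ : LinearMap.ker φ = ℓ.val)
    (hℓ : nsec S ℓ = k)
    (htype : ∀ P ∈ S, pgMem P ℓ → hasType2qk1 (Fintype.card F) k S P) {p : Fin 3 → F}
    (hp : p ∈ affinePart φ S) {hp0 : p ≠ 0}
    (hptype : hasType2qk1 (Fintype.card F) k S (mk F p hp0)) {m : PGLine F} (hm : nsec S m = k)
    (hpm : p ∈ m.val) {R : PGPoint F} (hRm : pgMem R m) (hRℓ : pgMem R ℓ) :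
    directions F (affinePart φ S) p =
      (Set.toFinite {X | pgMem X ℓ ∧ X ∉ S}).toFinset.val + Multiset.replicate (k - 2) R := by
  classical
  have hmℓ := ne_of_mem_affinePart hφ hp hpm
  have hRS := notMem_of_pgMem_of_nsec_eq hℓ htype hmℓ hm hRm hRℓ
  ext X
  rw [Multiset.count_add, Multiset.count_eq_of_nodup (Finset.nodup _), Multiset.count_replicate]
  simp only [Finset.mem_val, Set.Finite.mem_toFinset, Set.mem_ofPred_eq]
  by_cases hXdir : pgMem X ℓ ∧ X ∉ S
  · obtain ⟨hX, hXS⟩ := hXdir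
    obtain ⟨L, hpL, hXL⟩ := exists_pgLine_mem_pgMem hφ hp hX
    have hcount := nsec_eq_count_directions_add hφ hp hX hpL hXL
    rw [if_neg hXS] at hcount
    by_cases hXR : R = X
    · subst hXR
      have hLm : L = m := pgLine_eq_of_pgMem (mk_ne_of_mem_affinePart hφ hp (hp0 := hp0) hX)
        (mk_submodule_le_iff.2 hpL) hXL (mk_submodule_le_iff.2 hpm) hRm
      rw [hLm, hm] at hcount
      rw [if_pos ⟨hX, hXS⟩, if_pos rfl]
      omega
    · have hLk : nsec S L ≠ k := by
        intro h
        obtain rfl := hptype.eq_of_nsec_eq (mk_submodule_le_iff.2 hpL)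
          (mk_submodule_le_iff.2 hpm) h hm
        exact hmℓ (pgLine_eq_of_pgMem hXR hRm hXL hRℓ hX)
      rw [hptype.nsec_eq_two (by omega) (mk_submodule_le_iff.2 hpL) hLk] at hcount
      rw [if_pos ⟨hX, hXS⟩, if_neg hXR]
      omega
  · have hXdirections : X ∉ directions F (affinePart φ S) p := by
      intro hmem
      have hX : pgMem X ℓ := submodule_le_of_mem_directions (sub_mem_of_mem_affinePart hφ) hp hmem
      exact notMem_directions_of_mem (by omega) hφ hℓ htype hp
        (by_contra fun h => hXdir ⟨hX, h⟩) hX hmem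
    have hXR : R ≠ X := fun h => hXdir (h ▸ ⟨hRℓ, hRS⟩)
    rw [Multiset.count_eq_zero.2 hXdirections, if_neg hXdir, if_neg hXR]

theorem eq_of_pgMem_of_hasType2qk1 (hk : 3 ≤ k) (hS : S.ncard = Fintype.card F + k)
    (hℓ : nsec S ℓ = k) (htype : ∀ P ∈ S, pgMem P ℓ → hasType2qk1 (Fintype.card F) k S P)
    {m₁ m₂ : PGLine F} (hm₁ : nsec S m₁ = k) (hm₂ : nsec S m₂ = k) (hm₁ℓ : m₁ ≠ ℓ) (hm₂ℓ : m₂ ≠ ℓ)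
    (h₁ : ∃ P ∈ S, pgMem P m₁ ∧ hasType2qk1 (Fintype.card F) k S P)
    (h₂ : ∃ P ∈ S, pgMem P m₂ ∧ hasType2qk1 (Fintype.card F) k S P)
    {R₁ R₂ : PGPoint F} (hR₁m : pgMem R₁ m₁) (hR₁ℓ : pgMem R₁ ℓ) (hR₂m : pgMem R₂ m₂)
    (hR₂ℓ : pgMem R₂ ℓ) : R₁ = R₂ := by
  obtain ⟨φ, hφ⟩ := exists_ker_eq ℓ
  have hdirections : ∀ {m : PGLine F} {R : PGPoint F}, nsec S m = k → m ≠ ℓ →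
      (∃ P ∈ S, pgMem P m ∧ hasType2qk1 (Fintype.card F) k S P) → pgMem R m → pgMem R ℓ →
      ∃ p ∈ affinePart φ S, directions F (affinePart φ S) p =
        (Set.toFinite {X | pgMem X ℓ ∧ X ∉ S}).toFinset.val + Multiset.replicate (k - 2) R := by
    rintro m R hm hmℓ ⟨P, hPS, hPm, hP⟩ hRm hRℓ
    obtain ⟨p, hp, hp0, rfl⟩ := exists_mem_affinePart (φ := φ) hPS fun hPℓ =>
      notMem_of_pgMem_of_nsec_eq hℓ htype hmℓ hm hPm (hPℓ.trans_eq hφ) hPS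
    exact ⟨p, hp, directions_affinePart_eq hk hφ hℓ htype hp hP hm
      (mk_submodule_le_iff.1 hPm) hRm hRℓ⟩
  obtain ⟨p₁, hp₁, hd₁⟩ := hdirections hm₁ hm₁ℓ h₁ hR₁m hR₁ℓ
  obtain ⟨p₂, hp₂, hd₂⟩ := hdirections hm₂ hm₂ℓ h₂ hR₂m hR₂ℓ
  have hU : (affinePart φ S).card = Fintype.card F := by
    have := card_affinePart_add_nsec hφ S
    omega
  have hT : (Set.toFinite {X ∈ S | pgMem X ℓ}).toFinset.card = k := by
    rw [← Set.ncard_eq_toFinset_card, ← hℓ, nsec]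
  refine eq_of_directions_eq_add_replicate ℓ.2 hU (sub_mem_of_mem_affinePart hφ)
    (T := (Set.toFinite {X ∈ S | pgMem X ℓ}).toFinset) (fun X hX => ?_) (fun p hp X hX => ?_)
    (by omega) (by omega) hp₁ hp₂ hd₁ hd₂
  · exact ((Set.Finite.mem_toFinset _).1 hX).2
  · obtain ⟨hXS, hXℓ⟩ := (Set.Finite.mem_toFinset _).1 hX
    exact notMem_directions_of_mem (by omega) hφ hℓ htype hp hXS hXℓ

end TypedSecant

/-- Let `S` be a point set of size `q + k` in `PG(2,q)`, `k ≥ 3`.  Suppose `ℓ₁` is a `k`-secant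
of `S` all of whose points of `S ∩ ℓ₁` have type `(2_q, k_1)`.  Then all the `k`-secants of
`S` containing at least one point of type `(2_q, k_1)` are concurrent. -/
theorem stmt_13 {F : Type*} [Field F] [Fintype F] (q : ℕ) (hq : Fintype.card F = q)
    (k : ℕ) (hk : 3 ≤ k)
    (S : Set (PGPoint F)) (hsize : S.ncard = q + k)
    (ℓ₁ : PGLine F) (hℓ₁ : nsec S ℓ₁ = k)
    (htype : ∀ P ∈ S, pgMem P ℓ₁ → hasType2qk1 q k S P) :
    ∃ C : PGPoint F, ∀ m : PGLine F, nsec S m = k →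
      (∃ P ∈ S, pgMem P m ∧ hasType2qk1 q k S P) → pgMem C m := by
  subst hq
  by_cases hsecant : ∃ m : PGLine F, m ≠ ℓ₁ ∧ nsec S m = k ∧
      ∃ P ∈ S, pgMem P m ∧ hasType2qk1 (Fintype.card F) k S P
  · obtain ⟨m₁, hm₁ℓ, hm₁, htyped₁⟩ := hsecant
    obtain ⟨C, hCm₁, hCℓ⟩ := exists_pgMem_pgMem m₁ ℓ₁
    refine ⟨C, fun m hm htyped => ?_⟩
    obtain ⟨R, hRm, hRℓ⟩ := exists_pgMem_pgMem m ℓ₁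
    by_cases hmℓ : m = ℓ₁
    · rwa [hmℓ]
    · rwa [eq_of_pgMem_of_hasType2qk1 hk hsize hℓ₁ htype hm₁ hm hm₁ℓ hmℓ htyped₁ htyped
        hCm₁ hCℓ hRm hRℓ]
  · obtain ⟨C, hC, -⟩ := exists_pgMem_pgMem ℓ₁ ℓ₁
    refine ⟨C, fun m hm htyped => ?_⟩
    have hmℓ : m = ℓ₁ := by_contra fun hne => hsecant ⟨m, hne, hm, htyped⟩
    rwa [hmℓ]
end

section
/- Let S be a point set of size q + k in PG(2,q), with q odd. (1) If k = 1, then the tangents to S at the points of type (1_1, 2_q) form a dual arc. (2) If k = 2, then S contains at most two points of type (2_{q+1}). (3) If k ≥ 3, then the k-secants of S containing a point of type (2_q, k_1) form a dual arc. -/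
/-! Segre's lemma of tangents, with bisecants in place of tangents. Given three noncollinear
points of `S`, choose coordinates in which they are the fundamental triangle and a fourth point `C`
is `(1 : 1 : 1)`. If every line through a vertex that misses `C` is a bisecant, then the remaining
points of `S` have nonzero coordinates, and the lines `X j = a * X k` with `a ≠ 0, 1` each contain
exactly one of them. So `X j / X k` takes every value other than `0` and `1` exactly once, and by
Wilson's theorem `∏ X j = -∏ X k`. Going once around the triangle gives `∏ X 0 = -∏ X 0`, which is
impossible in odd characteristic. In parts (1) and (3) `C` is the supposed common point of the three
lines; in part (2) it is arbitrary. -/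

section Frame

open Module Projectivization
open scoped LinearAlgebra.Projectivization

variable {ι K V : Type*} [Field K] [AddCommGroup V] [Module K V]

/-- The vertices of the simplex of reference of the homogeneous coordinates given by a basis. -/
noncomputable def vertex (b : Basis ι K V) (i : ι) : ℙ K V :=
  mk K (b i) (b.ne_zero i)

theorem exists_basis_vertex_eq [Fintype ι] [Nonempty ι] {P : ι → ℙ K V} (hP : Independent P)
    (hι : Fintype.card ι = finrank K V) : ∃ b : Basis ι K V, vertex b = P := by
  cases hP with
  | mk v hv hli =>
    refine ⟨basisOfLinearIndependentOfCardEqFinrank hli hι, funext fun i => ?_⟩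
    simp only [vertex, coe_basisOfLinearIndependentOfCardEqFinrank]

theorem vertex_injective (b : Basis ι K V) : Function.Injective (vertex b) := by
  intro i j hij
  obtain ⟨a, ha⟩ := (mk_eq_mk_iff K _ _ _ _).1 hij
  by_contra hne
  simpa [Units.smul_def, hne] using congrArg (b.coord j) ha

variable [Fintype ι]

theorem coord_sum_basis (b : Basis ι K V) (i : ι) : b.coord i (∑ j, b j) = 1 := by
  classical
  simp [Finsupp.single_apply]

variable [Nonempty ι]

theorem sum_basis_ne_zero (b : Basis ι K V) : ∑ i, b i ≠ 0 := fun h => by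
  simpa [h] using coord_sum_basis b (Classical.arbitrary ι)

/-- The point `(1 : ⋯ : 1)` in the homogeneous coordinates given by a basis. -/
noncomputable def unitPoint (b : Basis ι K V) : ℙ K V :=
  mk K (∑ i, b i) (sum_basis_ne_zero b)

theorem exists_basis_vertex_eq_unitPoint_eq (b : Basis ι K V) {C : ℙ K V}
    (hC : ∀ i, b.coord i C.rep ≠ 0) :
    ∃ b' : Basis ι K V, vertex b' = vertex b ∧ unitPoint b' = C := by
  let c (i : ι) : Kˣ := Units.mk0 _ (hC i)
  refine ⟨b.unitsSMul c, funext fun i => ?_, ?_⟩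
  · exact (mk_eq_mk_iff K _ _ _ _).2 ⟨c i, (Basis.unitsSMul_apply i).symm⟩
  · have hsum : ∑ i, b.unitsSMul c i = C.rep := by
      simp only [c, Basis.unitsSMul_apply, Units.smul_mk0, Basis.coord_apply, b.sum_repr]
    simp only [unitPoint, hsum, mk_rep]

end Frame

section Incidence

open Module Projectivization
open scoped LinearAlgebra.Projectivization

variable {F : Type*} [Field F]

theorem mk_pgMem_iff {v : Fin 3 → F} {hv : v ≠ 0} {L : PGLine F} :
    pgMem (mk F v hv) L ↔ v ∈ L.val := by
  rw [pgMem, submodule_mk, Submodule.span_singleton_le_iff_mem]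

theorem pgMem_iff_rep_mem {P : PGPoint F} {L : PGLine F} : pgMem P L ↔ P.rep ∈ L.val := by
  rw [← mk_pgMem_iff (hv := P.rep_nonzero), mk_rep]

theorem eq_of_pgMem_of_pgMem {P Q : PGPoint F} (hPQ : P ≠ Q) {L M : PGLine F}
    (hPL : pgMem P L) (hQL : pgMem Q L) (hPM : pgMem P M) (hQM : pgMem Q M) : L = M := by
  simp only [pgMem, ← Submodule.mem_projectivization_iff_submodule_le] at hPL hQL hPM hQM
  exact Subtype.ext (line_unique hPQ _ _ L.2 M.2 hPL hQL hPM hQM)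

/-- The line on which a nonzero linear form vanishes. -/
def kerLine (f : Dual F (Fin 3 → F)) (hf : f ≠ 0) : PGLine F :=
  ⟨LinearMap.ker f, by
    have h := Dual.finrank_ker_add_one_of_ne_zero hf
    rw [finrank_fin_fun] at h
    lia⟩

theorem mk_pgMem_kerLine {f : Dual F (Fin 3 → F)} {hf : f ≠ 0} {v : Fin 3 → F} {hv : v ≠ 0} :
    pgMem (mk F v hv) (kerLine f hf) ↔ f v = 0 :=
  mk_pgMem_iff

theorem pgMem_kerLine {f : Dual F (Fin 3 → F)} {hf : f ≠ 0} {P : PGPoint F} :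
    pgMem P (kerLine f hf) ↔ f P.rep = 0 :=
  pgMem_iff_rep_mem

/-- The side of the triangle of reference opposite to the `i`-th vertex. -/
noncomputable def side (b : Basis (Fin 3) F (Fin 3 → F)) (i : Fin 3) : PGLine F :=
  kerLine (b.coord i) fun h => by simpa using LinearMap.congr_fun h (b i)

variable {b : Basis (Fin 3) F (Fin 3 → F)}

theorem pgMem_side {i : Fin 3} {P : PGPoint F} : pgMem P (side b i) ↔ b.coord i P.rep = 0 :=
  pgMem_kerLine

theorem vertex_pgMem_side {i j : Fin 3} : pgMem (vertex b j) (side b i) ↔ j ≠ i := by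
  simp [vertex, side, mk_pgMem_kerLine, Finsupp.single_apply]

theorem not_unitPoint_pgMem_side (i : Fin 3) : ¬ pgMem (unitPoint b) (side b i) := by
  rw [unitPoint, side, mk_pgMem_kerLine, coord_sum_basis]
  exact one_ne_zero

theorem exists_pair_ne_of_fin_three (i : Fin 3) : ∃ j k, j ≠ i ∧ k ≠ i ∧ j ≠ k := by
  decide +revert

theorem coord_rep_ne_zero_of_concurrent {t : Fin 3 → PGLine F} {C : PGPoint F}
    (hbt : ∀ i j, pgMem (vertex b i) (t j) ↔ i = j) (hC : ∀ i, pgMem C (t i)) (i : Fin 3) :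
    b.coord i C.rep ≠ 0 := by
  intro hi
  obtain ⟨j, k, hji, hki, hjk⟩ := exists_pair_ne_of_fin_three i
  have hCj : C ≠ vertex b j := fun h => hjk ((hbt j k).1 (h ▸ hC k))
  have hside : side b i = t j := eq_of_pgMem_of_pgMem hCj (pgMem_side.2 hi)
    (vertex_pgMem_side.2 hji) (hC j) ((hbt j j).2 rfl)
  exact hjk.symm ((hbt k j).1 (hside ▸ vertex_pgMem_side.2 hki))

theorem independent_of_not_collinear {P : Fin 3 → PGPoint F}
    (h : ∀ L : PGLine F, ¬ ∀ i, pgMem (P i) L) : Independent P := by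
  rw [independent_iff]
  refine linearIndependent_of_top_le_span_of_card_eq_finrank ?_ (by simp)
  by_contra hspan
  obtain ⟨f, hf, hker⟩ := Submodule.exists_le_ker_of_lt_top _ (lt_top_iff_ne_top.2 (hspan ∘ Eq.ge))
  exact h (kerLine f hf) fun i => pgMem_kerLine.2 (hker (Submodule.subset_span ⟨i, rfl⟩))

end Incidence

section Pencil

open Module Projectivization
open scoped LinearAlgebra.Projectivization

theorem finrank_map_mkQ_add_finrank {K V : Type*} [DivisionRing K] [AddCommGroup V] [Module K V]
    [FiniteDimensional K V] {p W : Submodule K V} (h : p ≤ W) :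
    finrank K (W.map p.mkQ) + finrank K p = finrank K W := by
  have hV := W.finrank_quotient_add_finrank
  have hp := p.finrank_quotient_add_finrank
  have hW := (W.map p.mkQ).finrank_quotient_add_finrank
  have hquot := (Submodule.quotientQuotientEquivQuotient p W h).finrank_eq
  lia

variable {F : Type*} [Field F]

/-- The lines through `P` are the points of the projective line `ℙ(F³ / P)`. -/
noncomputable def pencilEquiv (P : PGPoint F) :
    {L : PGLine F // pgMem P L} ≃ ℙ F ((Fin 3 → F) ⧸ P.submodule) where
  toFun L := mk'' (L.1.1.map P.submodule.mkQ) <| by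
    have h := finrank_map_mkQ_add_finrank L.2
    rw [L.1.2, finrank_submodule] at h
    lia
  invFun Q := ⟨⟨Q.submodule.comap P.submodule.mkQ, by
    rw [← finrank_map_mkQ_add_finrank (Submodule.le_comap_mkQ _ _), finrank_submodule,
      Submodule.map_comap_eq_of_surjective (Submodule.mkQ_surjective _), finrank_submodule]⟩,
    Submodule.le_comap_mkQ _ _⟩
  left_inv L := by
    refine Subtype.ext (Subtype.ext ?_)
    simp only [submodule_mk'', Submodule.comap_map_mkQ]
    exact sup_eq_right.2 L.2
  right_inv Q := submodule_injective <| by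
    simp only [submodule_mk'', Submodule.map_comap_eq_of_surjective (Submodule.mkQ_surjective _)]

variable [Fintype F]

theorem ncard_pencil (P : PGPoint F) : {L : PGLine F | pgMem P L}.ncard = Fintype.card F + 1 := by
  have hdim : finrank F ((Fin 3 → F) ⧸ P.submodule) = 2 := by
    rw [Submodule.finrank_quotient, finrank_fin_fun, finrank_submodule]
  rw [← Nat.card_coe_set_eq, ← Nat.card_eq_fintype_card, ← card_of_finrank_two F _ hdim]
  exact Nat.card_congr (pencilEquiv P)

theorem forall_of_ncard_pencil_eq {P : PGPoint F} {p : PGLine F → Prop}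
    (h : {L | pgMem P L ∧ p L}.ncard = Fintype.card F + 1) {L : PGLine F} (hL : pgMem P L) :
    p L := by
  have heq : {L | pgMem P L ∧ p L} = {L | pgMem P L} :=
    Set.eq_of_subset_of_ncard_le (fun _ h => h.1) (by rw [h, ncard_pencil])
  exact (heq.ge hL).2

theorem forall_ne_of_ncard_pencil_eq {P : PGPoint F} {p : PGLine F → Prop} {t : PGLine F}
    (hPt : pgMem P t) (ht : ¬ p t) (h : {L | pgMem P L ∧ p L}.ncard = Fintype.card F)
    {L : PGLine F} (hL : pgMem P L) (hLt : L ≠ t) : p L := by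
  have heq : {L | pgMem P L ∧ p L} = {L | pgMem P L} \ {t} := by
    refine Set.eq_of_subset_of_ncard_le (fun M hM => ⟨hM.1, ?_⟩) ?_
    · rintro rfl
      exact ht hM.2
    · rw [Set.ncard_sdiff_singleton_of_mem hPt, ncard_pencil, h, Nat.add_sub_cancel]
  exact (heq.ge ⟨hL, hLt⟩).2

end Pencil

section Bisecant

variable {F : Type*} [Field F] {S : Set (PGPoint F)}

theorem existsUnique_ne_of_nsec_eq_two {P : PGPoint F} {L : PGLine F} (hPS : P ∈ S)
    (hPL : pgMem P L) (hL : nsec S L = 2) : ∃! Q, Q ∈ S ∧ Q ≠ P ∧ pgMem Q L := by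
  have hcard : ({Q ∈ S | pgMem Q L} \ {P}).ncard = 1 := by
    rw [Set.ncard_sdiff_singleton_of_mem (show P ∈ {Q ∈ S | pgMem Q L} from ⟨hPS, hPL⟩)]
    exact congrArg (· - 1) hL
  obtain ⟨Q, hQ⟩ := Set.ncard_eq_one.1 hcard
  simp only [Set.ext_iff, Set.mem_sdiff, Set.mem_ofPred_eq, Set.mem_singleton_iff] at hQ
  exact ⟨Q, by grind, by grind⟩

theorem independent_of_nsec_eq_two {P : Fin 3 → PGPoint F} (hinj : Function.Injective P)
    (hPS : ∀ i, P i ∈ S) (h : ∀ L, (∀ i, pgMem (P i) L) → nsec S L = 2) :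
    Projectivization.Independent P := by
  refine independent_of_not_collinear fun L hL => ?_
  have h12 : P 1 = P 2 := (existsUnique_ne_of_nsec_eq_two (hPS 0) (hL 0) (h L hL)).unique
    ⟨hPS 1, hinj.ne (by decide), hL 1⟩ ⟨hPS 2, hinj.ne (by decide), hL 2⟩
  exact hinj.ne (by decide) h12

end Bisecant

theorem prod_eq_prod_univ_of_existsUnique {α M : Type*} [Fintype α] [CommMonoid M] [Fintype M]
    {f : α → M} (h : ∀ m ≠ 1, ∃! x, f x = m) : ∏ x, f x = ∏ m, m := by
  classical
  rw [← Finset.prod_fiberwise Finset.univ f f]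
  refine Finset.prod_congr rfl fun m _ => ?_
  by_cases hm : m = 1
  · exact (Finset.prod_eq_one fun x hx => (Finset.mem_filter.1 hx).2.trans hm).trans hm.symm
  · obtain ⟨x, rfl, hx⟩ := h m hm
    have hfiber : ({y | f y = f x} : Finset α) = {x} := by
      ext y
      simpa using ⟨hx y, congrArg f⟩
    rw [hfiber, Finset.prod_singleton]

section Segre

open Module

variable {F : Type*} [Field F] {S : Set (PGPoint F)} {b : Basis (Fin 3) F (Fin 3 → F)}

/-- The configuration to which Segre's argument applies: a triangle inscribed in `S`, with a
fourth point completing it to a frame, such that each line through a vertex is a bisecant unless it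
passes through the fourth point. The frame is encoded by a basis of `F³`. -/
structure IsBisecantFrame (S : Set (PGPoint F)) (b : Basis (Fin 3) F (Fin 3 → F)) : Prop where
  vertex_mem : ∀ i, vertex b i ∈ S
  nsec_eq_two : ∀ i L, pgMem (vertex b i) L → ¬ pgMem (unitPoint b) L → nsec S L = 2

namespace IsBisecantFrame

theorem coord_rep_ne_zero (h : IsBisecantFrame S b) (i : Fin 3) {R : PGPoint F} (hRS : R ∈ S)
    (hR : R ∉ Set.range (vertex b)) : b.coord i R.rep ≠ 0 := by
  intro hi
  obtain ⟨j, k, hji, hki, hjk⟩ := exists_pair_ne_of_fin_three i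
  have hj : pgMem (vertex b j) (side b i) := vertex_pgMem_side.2 hji
  have hbisecant : nsec S (side b i) = 2 := h.nsec_eq_two j _ hj (not_unitPoint_pgMem_side i)
  have hRk : R = vertex b k :=
    (existsUnique_ne_of_nsec_eq_two (h.vertex_mem j) hj hbisecant).unique
      ⟨hRS, fun hRj => hR ⟨j, hRj.symm⟩, pgMem_side.2 hi⟩
      ⟨h.vertex_mem k, (vertex_injective b).ne hjk.symm, vertex_pgMem_side.2 hki⟩
  exact hR ⟨k, hRk.symm⟩

theorem existsUnique_coord_eq_mul (h : IsBisecantFrame S b) {j k : Fin 3} (hjk : j ≠ k) {a : F}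
    (ha₀ : a ≠ 0) (ha₁ : a ≠ 1) :
    ∃! R : ↥(S \ Set.range (vertex b)), b.coord j R.1.rep = a * b.coord k R.1.rep := by
  obtain ⟨i, hij, hik, hcases⟩ :
      ∃ i : Fin 3, i ≠ j ∧ i ≠ k ∧ ∀ l, l = i ∨ l = j ∨ l = k := by decide +revert
  have hf : b.coord j - a • b.coord k ≠ 0 := fun h => by
    simpa [hjk] using LinearMap.congr_fun h (b j)
  have hmem (R : PGPoint F) : pgMem R (kerLine _ hf) ↔ b.coord j R.rep = a * b.coord k R.rep :=
    pgMem_kerLine.trans sub_eq_zero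
  have hi : pgMem (vertex b i) (kerLine _ hf) := mk_pgMem_kerLine.2 (by simp [hij, hik])
  have hunit : ¬ pgMem (unitPoint b) (kerLine _ hf) := by
    simpa only [unitPoint, mk_pgMem_kerLine, LinearMap.sub_apply, LinearMap.smul_apply,
      coord_sum_basis, smul_eq_mul, mul_one, sub_eq_zero] using ha₁.symm
  have hvertex (l : Fin 3) (hl : pgMem (vertex b l) (kerLine _ hf)) : l = i := by
    rw [vertex, mk_pgMem_kerLine] at hl
    rcases hcases l with rfl | rfl | rfl
    · rfl
    · simp [hjk] at hl
    · simp [hjk.symm, ha₀] at hl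
  obtain ⟨R, ⟨hRS, hRi, hRL⟩, huniq⟩ :=
    existsUnique_ne_of_nsec_eq_two (h.vertex_mem i) hi (h.nsec_eq_two i _ hi hunit)
  have hR : R ∉ Set.range (vertex b) := by
    rintro ⟨l, rfl⟩
    exact hRi (congrArg _ (hvertex l hRL))
  exact ⟨⟨R, hRS, hR⟩, (hmem R).1 hRL, fun Q hQ => Subtype.ext <|
    huniq Q ⟨Q.2.1, fun hQi => Q.2.2 ⟨i, hQi.symm⟩, (hmem Q).2 hQ⟩⟩

theorem prod_coord_rep_eq_neg [Finite F] [Fintype ↥(S \ Set.range (vertex b))]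
    (h : IsBisecantFrame S b) {j k : Fin 3} (hjk : j ≠ k) :
    ∏ R : ↥(S \ Set.range (vertex b)), b.coord j R.1.rep =
      -∏ R : ↥(S \ Set.range (vertex b)), b.coord k R.1.rep := by
  have := Fintype.ofFinite Fˣ
  let x (i : Fin 3) (R : ↥(S \ Set.range (vertex b))) : Fˣ :=
    Units.mk0 (b.coord i R.1.rep) (h.coord_rep_ne_zero i R.2.1 R.2.2)
  have hwilson : ∏ R, x j R / x k R = -1 := by
    refine (prod_eq_prod_univ_of_existsUnique fun a ha => ?_).trans
      FiniteField.prod_univ_units_id_eq_neg_one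
    simpa [x, div_eq_iff_eq_mul, Units.ext_iff] using
      h.existsUnique_coord_eq_mul hjk a.ne_zero (Units.val_eq_one.not.2 ha)
  rw [Finset.prod_div_distrib, div_eq_iff_eq_mul, Units.ext_iff] at hwilson
  simpa [x] using hwilson

end IsBisecantFrame

theorem not_isBisecantFrame [Finite F] (hchar : ringChar F ≠ 2) : ¬ IsBisecantFrame S b := by
  intro h
  have := Fintype.ofFinite ↥(S \ Set.range (vertex b))
  have hprod : ∏ R : ↥(S \ Set.range (vertex b)), b.coord 0 R.1.rep ≠ 0 :=
    Finset.prod_ne_zero_iff.2 fun R _ => h.coord_rep_ne_zero 0 R.2.1 R.2.2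
  refine hprod ((Ring.eq_self_iff_eq_zero_of_char_ne_two hchar).1 ?_)
  calc -∏ R : ↥(S \ Set.range (vertex b)), b.coord 0 R.1.rep
      = ∏ R : ↥(S \ Set.range (vertex b)), b.coord 1 R.1.rep :=
        (h.prod_coord_rep_eq_neg (by decide)).symm
    _ = -∏ R : ↥(S \ Set.range (vertex b)), b.coord 2 R.1.rep :=
        h.prod_coord_rep_eq_neg (by decide)
    _ = ∏ R : ↥(S \ Set.range (vertex b)), b.coord 0 R.1.rep :=
        (h.prod_coord_rep_eq_neg (by decide)).symm

end Segre

section DualArc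

open Module Projectivization

variable {F : Type*} [Field F] {S : Set (PGPoint F)}

/-- A dual arc: a set of lines no three of which are concurrent. -/
def IsDualArc (T : Set (PGLine F)) : Prop :=
  ∀ t₁ ∈ T, ∀ t₂ ∈ T, ∀ t₃ ∈ T, t₁ ≠ t₂ → t₁ ≠ t₃ → t₂ ≠ t₃ →
    ¬ ∃ C : PGPoint F, pgMem C t₁ ∧ pgMem C t₂ ∧ pgMem C t₃

theorem IsDualArc.mono {T U : Set (PGLine F)} (hU : IsDualArc U) (hTU : T ⊆ U) : IsDualArc T :=
  fun t₁ h₁ t₂ h₂ t₃ h₃ => hU t₁ (hTU h₁) t₂ (hTU h₂) t₃ (hTU h₃)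

/-- A line which is the only non-bisecant of `S` through one of the points of `S` on it. The lines
considered in (1) and (3) are of this kind. -/
def IsExceptionalSecant (S : Set (PGPoint F)) (t : PGLine F) : Prop :=
  nsec S t ≠ 2 ∧ ∃ P ∈ S, pgMem P t ∧ ∀ L, pgMem P L → L ≠ t → nsec S L = 2

theorem isExceptionalSecant_of_ncard [Fintype F] {P : PGPoint F} {t : PGLine F}
    (ht : nsec S t ≠ 2) (hPS : P ∈ S) (hPt : pgMem P t)
    (hP : {L : PGLine F | pgMem P L ∧ nsec S L = 2}.ncard = Fintype.card F) :
    IsExceptionalSecant S t :=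
  ⟨ht, P, hPS, hPt, fun _ => forall_ne_of_ncard_pencil_eq hPt ht hP⟩

theorem not_concurrent_of_isExceptionalSecant [Finite F] (hchar : ringChar F ≠ 2)
    {t : Fin 3 → PGLine F} (hinj : Function.Injective t) (ht : ∀ i, IsExceptionalSecant S (t i))
    (C : PGPoint F) : ¬ ∀ i, pgMem C (t i) := by
  intro hC
  choose hnsec P hPS hPt hbisecant using ht
  have hPt_iff (i j : Fin 3) : pgMem (P i) (t j) ↔ i = j := by
    refine ⟨fun hmem => ?_, fun hij => hij ▸ hPt i⟩
    by_contra hij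
    exact hnsec j (hbisecant i _ hmem (hinj.ne (Ne.symm hij)))
  have hPinj : Function.Injective P := fun i j hij => (hPt_iff i j).1 (hij ▸ hPt j)
  have hP : Independent P := independent_of_nsec_eq_two hPinj hPS fun L hL =>
    hbisecant 0 L (hL 0) fun hL0 => one_ne_zero ((hPt_iff 1 0).1 (hL0 ▸ hL 1))
  obtain ⟨b, rfl⟩ := exists_basis_vertex_eq hP (by simp)
  obtain ⟨b', hb', rfl⟩ :=
    exists_basis_vertex_eq_unitPoint_eq b (coord_rep_ne_zero_of_concurrent hPt_iff hC)
  rw [← hb'] at hPS hbisecant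
  exact not_isBisecantFrame hchar (b := b')
    ⟨hPS, fun i L hL hCL => hbisecant i L hL fun hLt => hCL (hLt ▸ hC i)⟩

theorem injective_vecCons_of_ne {α : Type*} {x y z : α} (hxy : x ≠ y) (hxz : x ≠ z) (hyz : y ≠ z) :
    Function.Injective ![x, y, z] := by
  intro i j hij
  fin_cases i <;> fin_cases j <;> simp_all

theorem isDualArc_setOf_isExceptionalSecant [Finite F] (hchar : ringChar F ≠ 2) :
    IsDualArc {t | IsExceptionalSecant S t} := by
  rintro t₁ h₁ t₂ h₂ t₃ h₃ h₁₂ h₁₃ h₂₃ ⟨C, hC⟩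
  have hinj : Function.Injective ![t₁, t₂, t₃] := injective_vecCons_of_ne h₁₂ h₁₃ h₂₃
  refine not_concurrent_of_isExceptionalSecant (S := S) hchar hinj ?_ C ?_
  · simpa [Fin.forall_fin_succ] using ⟨h₁, h₂, h₃⟩
  · simpa [Fin.forall_fin_succ] using hC

theorem ncard_setOf_forall_nsec_eq_two_le [Finite F] (hchar : ringChar F ≠ 2) :
    {P ∈ S | ∀ L, pgMem P L → nsec S L = 2}.ncard ≤ 2 := by
  by_contra! hlt
  obtain ⟨x, hx, y, hy, z, hz, hxy, hxz, hyz⟩ := (Set.two_lt_ncard (Set.toFinite _)).1 hlt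
  have hmem : ∀ i, ![x, y, z] i ∈ {P ∈ S | ∀ L, pgMem P L → nsec S L = 2} := by
    intro i
    fin_cases i
    exacts [hx, hy, hz]
  have hP : Independent ![x, y, z] :=
    independent_of_nsec_eq_two (injective_vecCons_of_ne hxy hxz hyz) (fun i => (hmem i).1)
      fun L hL => (hmem 0).2 L (hL 0)
  obtain ⟨b, hb⟩ := exists_basis_vertex_eq hP (by simp)
  rw [← hb] at hmem
  exact not_isBisecantFrame hchar (b := b)
    ⟨fun i => (hmem i).1, fun i L hL _ => (hmem i).2 L hL⟩

end DualArc

/-- Let `S` be a point set of size `q + k` in `PG(2,q)`, `q` odd.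
(1) If `k = 1`, then the tangents to `S` at the points of type `(1_1, 2_q)` form a dual arc
    (no three of these lines are concurrent).
(2) If `k = 2`, then `S` contains at most two points of type `(2_{q+1})`.
(3) If `k ≥ 3`, then the `k`-secants of `S` containing a point of type `(2_q, k_1)` form a
    dual arc. -/
theorem stmt_14 {F : Type*} [Field F] [Fintype F] (q : ℕ) (hq : Fintype.card F = q)
    (hqodd : Odd q) (k : ℕ)
    (S : Set (PGPoint F)) (hsize : S.ncard = q + k) :
    -- (1)
    (k = 1 →
      ∀ T : Set (PGLine F),
        T = {t : PGLine F | nsec S t = 1 ∧ ∃ P ∈ S, pgMem P t ∧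
              {L : PGLine F | pgMem P L ∧ nsec S L = 1}.ncard = 1 ∧
              {L : PGLine F | pgMem P L ∧ nsec S L = 2}.ncard = q} →
        ∀ t₁ ∈ T, ∀ t₂ ∈ T, ∀ t₃ ∈ T, t₁ ≠ t₂ → t₁ ≠ t₃ → t₂ ≠ t₃ →
          ¬ ∃ C : PGPoint F, pgMem C t₁ ∧ pgMem C t₂ ∧ pgMem C t₃) ∧
    -- (2)
    (k = 2 →
      {P ∈ S | {L : PGLine F | pgMem P L ∧ nsec S L = 2}.ncard = q + 1}.ncard ≤ 2) ∧
    -- (3)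
    (3 ≤ k →
      ∀ T : Set (PGLine F),
        T = {m : PGLine F | nsec S m = k ∧ ∃ P ∈ S, pgMem P m ∧ hasType2qk1 q k S P} →
        ∀ t₁ ∈ T, ∀ t₂ ∈ T, ∀ t₃ ∈ T, t₁ ≠ t₂ → t₁ ≠ t₃ → t₂ ≠ t₃ →
          ¬ ∃ C : PGPoint F, pgMem C t₁ ∧ pgMem C t₂ ∧ pgMem C t₃) := by
  subst hq
  have hchar : ringChar F ≠ 2 := fun h =>
    Nat.not_even_iff_odd.2 hqodd (Nat.even_iff.2 (FiniteField.even_card_iff_char_two.1 h))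
  refine ⟨?_, fun _ => ?_, ?_⟩
  · rintro rfl T rfl
    exact (isDualArc_setOf_isExceptionalSecant hchar).mono fun t ⟨ht, P, hPS, hPt, _, hP⟩ =>
      isExceptionalSecant_of_ncard (by lia) hPS hPt hP
  · refine le_trans (Set.ncard_le_ncard ?_) (ncard_setOf_forall_nsec_eq_two_le (S := S) hchar)
    exact fun P hP => ⟨hP.1, fun L => forall_of_ncard_pencil_eq hP.2⟩
  · rintro hk T rfl
    exact (isDualArc_setOf_isExceptionalSecant hchar).mono fun t ⟨ht, P, hPS, hPt, hP, _⟩ =>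
      isExceptionalSecant_of_ncard (by lia) hPS hPt hP
end
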